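/- Let v ∈ ℝ, s > 0, and a > √3. Let A be the 3×3 matrix with (j,k) entry Δ_{j+k}(v, s²) and B the 3×3 matrix with (j,k) entry Δ_{j+k+1}(v, s²), for 0 ≤ j, k ≤ 2. Then both matrices (v + a s)A − B and B − (v − a s)A are positive definite. -/

import Mathlib

/-!
Substitute `x = v + s z` with `z` standard normal, and write a polynomial `p` of degree at most `2`
in the Hermite basis `1, z, z ^ 2 - 1`. The quadratic forms `E[p ^ 2]` and `E[x p ^ 2]` of the two
Hankel matrices become those of `D` and `v D + s J`, where `D = diag(0!, 1!, 2!)` is the Gram matrix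
of the Hermite basis and `J` is the tridiagonal matrix of `E[z p ^ 2]`. By congruence only the
definiteness of `x D + y J` is at stake, and it holds for `√3 |y| < x` because the eigenvalues of
`J` relative to `D` are the roots `0, ±√3` of the third Hermite polynomial `z ^ 3 - 3 z`.
-/

open MeasureTheory Real

/-- The `k`-th moment `Δ_k(v, s²)` of the normal distribution with mean `v` and variance `s²`. -/
noncomputable def gaussMoment (v s : ℝ) (k : ℕ) : ℝ :=
  ∫ x : ℝ, x ^ k * ((2 * π * s ^ 2) ^ (-(1 : ℝ) / 2) * Real.exp (-(x - v) ^ 2 / (2 * s ^ 2)))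

open ProbabilityTheory
open scoped NNReal Matrix

section Stein

lemma hasDerivAt_gaussianPDFReal (μ : ℝ) (c : ℝ≥0) (x : ℝ) :
    HasDerivAt (gaussianPDFReal μ c) (-((x - μ) / c) * gaussianPDFReal μ c x) x := by
  have h_exponent : HasDerivAt (fun x ↦ -(x - μ) ^ 2 / (2 * c)) (-((x - μ) / c)) x :=
    ((((hasDerivAt_id x).sub_const μ).pow 2).neg.div_const (2 * (c : ℝ))).congr_deriv (by
      simp only [id_eq]
      ring)
  exact (h_exponent.exp.const_mul _).congr_deriv (by rw [gaussianPDFReal]; ring)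

variable {E : Type*} [NormedAddCommGroup E] [NormedSpace ℝ E] {μ : ℝ} {c : ℝ≥0} {f f' : ℝ → E}

lemma integrable_gaussianReal_iff_integrable_smul (hc : c ≠ 0) :
    Integrable f (gaussianReal μ c) ↔ Integrable fun x ↦ gaussianPDFReal μ c x • f x := by
  rw [gaussianReal_of_var_ne_zero _ hc,
    integrable_withDensity_iff_integrable_smul' (measurable_gaussianPDF μ c)
      (ae_of_all _ fun _ ↦ gaussianPDF_lt_top)]
  simp only [toReal_gaussianPDF]

lemma integral_sub_mean_smul_gaussianReal (hf : ∀ x, HasDerivAt f (f' x) x)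
    (h_int : Integrable f (gaussianReal μ c)) (h_int' : Integrable f' (gaussianReal μ c))
    (h_int_sub : Integrable (fun x ↦ (x - μ) • f x) (gaussianReal μ c)) :
    ∫ x, (x - μ) • f x ∂gaussianReal μ c = c • ∫ x, f' x ∂gaussianReal μ c := by
  obtain rfl | hc := eq_or_ne c 0
  · rw [gaussianReal_zero_var, zero_smul]
    exact integral_eq_zero_of_ae (by simp [Filter.EventuallyEq, ae_dirac_eq])
  have h_deriv (x : ℝ) : HasDerivAt (fun x ↦ gaussianPDFReal μ c x • (c : ℝ) • f x)
      (gaussianPDFReal μ c x • ((c : ℝ) • f' x - (x - μ) • f x)) x := by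
    refine ((hasDerivAt_gaussianPDFReal μ c x).smul ((hf x).const_smul (c : ℝ))).congr_deriv ?_
    have hc' : (c : ℝ) ≠ 0 := by exact_mod_cast hc
    simp only [Pi.smul_apply]
    match_scalars <;> field_simp
  have h_int_smul : Integrable (fun x ↦ (c : ℝ) • f' x) (gaussianReal μ c) := h_int'.smul (c : ℝ)
  have h_zero := integral_eq_zero_of_hasDerivAt_of_integrable h_deriv
    ((integrable_gaussianReal_iff_integrable_smul hc).1 (h_int_smul.sub h_int_sub))
    ((integrable_gaussianReal_iff_integrable_smul hc).1 (h_int.smul (c : ℝ)))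
  rw [← integral_gaussianReal_eq_integral_smul hc,
    integral_sub h_int_smul h_int_sub, integral_smul] at h_zero
  exact (sub_eq_zero.1 h_zero).symm

end Stein

section Moments

lemma integrable_pow_gaussianReal (μ : ℝ) (c : ℝ≥0) (k : ℕ) :
    Integrable (fun x ↦ x ^ k) (gaussianReal μ c) :=
  integrable_pow_of_mem_interior_integrableExpSet (X := id) (by simp) k

-- For `k = 0` the truncated exponent `k - 1` is harmless, its integral being multiplied by `k`.
lemma integral_pow_succ_gaussianReal (μ : ℝ) (c : ℝ≥0) (k : ℕ) :
    ∫ x, x ^ (k + 1) ∂gaussianReal μ c =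
      μ * ∫ x, x ^ k ∂gaussianReal μ c + c * (k * ∫ x, x ^ (k - 1) ∂gaussianReal μ c) := by
  have h_int := integrable_pow_gaussianReal μ c
  have h_sub (x : ℝ) : (x - μ) • x ^ k = x ^ (k + 1) - μ * x ^ k := by
    rw [smul_eq_mul]
    ring
  have h_stein := integral_sub_mean_smul_gaussianReal (hasDerivAt_pow k) (h_int k)
    ((h_int (k - 1)).const_mul (k : ℝ))
    (by simp only [h_sub]; exact (h_int (k + 1)).sub ((h_int k).const_mul μ))
  simp only [h_sub] at h_stein
  rw [integral_sub (h_int (k + 1)) ((h_int k).const_mul μ), integral_const_mul,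
    integral_const_mul, NNReal.smul_def, smul_eq_mul] at h_stein
  linarith

variable {s : ℝ}

lemma gaussMoment_eq_integral_gaussianReal (v : ℝ) (hs : s ≠ 0) (k : ℕ) :
    gaussMoment v s k = ∫ x, x ^ k ∂gaussianReal v (.mk (s ^ 2) (sq_nonneg s)) := by
  have h_var : NNReal.mk (s ^ 2) (sq_nonneg s) ≠ 0 :=
    fun h ↦ pow_ne_zero 2 hs (congrArg NNReal.toReal h)
  have h_rpow : (2 * π * s ^ 2) ^ (-(1 : ℝ) / 2) = (√(2 * π * s ^ 2))⁻¹ := by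
    rw [neg_div, rpow_neg (by positivity), sqrt_eq_rpow]
  rw [integral_gaussianReal_eq_integral_smul h_var, gaussMoment]
  refine integral_congr_ae (ae_of_all _ fun x ↦ ?_)
  simp only [h_rpow, gaussianPDFReal, NNReal.coe_mk, smul_eq_mul]
  ring

lemma gaussMoment_zero (v : ℝ) (hs : s ≠ 0) : gaussMoment v s 0 = 1 := by
  simp [gaussMoment_eq_integral_gaussianReal v hs]

lemma gaussMoment_succ (v : ℝ) (hs : s ≠ 0) (k : ℕ) :
    gaussMoment v s (k + 1) =
      v * gaussMoment v s k + s ^ 2 * (k * gaussMoment v s (k - 1)) := by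
  simp only [gaussMoment_eq_integral_gaussianReal v hs]
  exact integral_pow_succ_gaussianReal v _ k

end Moments

section Hankel

lemma posDef_transpose_mul_mul_same {n : Type*} [Fintype n] [DecidableEq n] {M P : Matrix n n ℝ}
    (hM : M.PosDef) (hP : P.det ≠ 0) : (Pᵀ * M * P).PosDef := by
  simpa only [Matrix.conjTranspose_eq_transpose_of_trivial] using
    hM.conjTranspose_mul_mul_same (Matrix.mulVec_injective_of_det_ne_zero hP)

/-- The `n × n` Hankel matrix of the sequence `m`, the Gram matrix of the monomials
`1, x, …, x ^ (n - 1)` when `m` is a sequence of moments. -/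
def hankel {R : Type*} (n : ℕ) (m : ℕ → R) : Matrix (Fin n) (Fin n) R :=
  .of fun j k ↦ m (j + k)

/-- The change of basis from monomials to Hermite polynomials: column `j` holds the coordinates of
`(v + s z) ^ j` in the basis `1, z, z ^ 2 - 1`. -/
def hermiteCoords (v s : ℝ) : Matrix (Fin 3) (Fin 3) ℝ :=
  !![1, v, v ^ 2 + s ^ 2; 0, s, 2 * v * s; 0, 0, s ^ 2]

/-- The Gram matrix of the Hermite polynomials `1, z, z ^ 2 - 1` for the standard normal
distribution. -/
def hermiteGram : Matrix (Fin 3) (Fin 3) ℝ :=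
  .diagonal ![1, 1, 2]

/-- The matrix of the bilinear form `(p, q) ↦ E[z p q]`, for `z` standard normal, in the Hermite
basis `1, z, z ^ 2 - 1`. -/
def hermiteJacobi : Matrix (Fin 3) (Fin 3) ℝ :=
  !![0, 1, 0; 1, 0, 2; 0, 2, 0]

variable {s : ℝ}

lemma det_hermiteCoords (v s : ℝ) : (hermiteCoords v s).det = s * s ^ 2 := by
  simp [hermiteCoords, Matrix.det_fin_three]

lemma hankel_gaussMoment_eq (v : ℝ) (hs : s ≠ 0) :
    hankel 3 (gaussMoment v s) = (hermiteCoords v s)ᵀ * hermiteGram * hermiteCoords v s := by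
  ext i j
  fin_cases i <;> fin_cases j <;>
    simp [hankel, hermiteCoords, hermiteGram, Matrix.mul_apply, Fin.sum_univ_three,
      gaussMoment_succ v hs, gaussMoment_zero v hs] <;> ring

lemma hankel_gaussMoment_succ_eq (v : ℝ) (hs : s ≠ 0) :
    hankel 3 (fun k ↦ gaussMoment v s (k + 1)) =
      (hermiteCoords v s)ᵀ * (v • hermiteGram + s • hermiteJacobi) * hermiteCoords v s := by
  ext i j
  fin_cases i <;> fin_cases j <;>
    simp [hankel, hermiteCoords, hermiteGram, hermiteJacobi, Matrix.mul_apply,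
      Fin.sum_univ_three, gaussMoment_succ v hs, gaussMoment_zero v hs] <;> ring

lemma posDef_smul_hermiteGram_add_smul_hermiteJacobi {x y : ℝ} (hxy : √3 * |y| < x) :
    (x • hermiteGram + y • hermiteJacobi).PosDef := by
  have hx : 0 < x := lt_of_le_of_lt (by positivity) hxy
  have h_sq : 0 < x ^ 2 - 3 * y ^ 2 := by
    have h_pow := pow_lt_pow_left₀ hxy (by positivity) two_ne_zero
    rw [mul_pow, sq_abs, sq_sqrt (by norm_num)] at h_pow
    linarith
  have h_diag : (Matrix.diagonal ![1, x ^ 2 - 3 * y ^ 2, 2]).PosDef := by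
    simpa [Matrix.posDef_diagonal_iff, Fin.forall_fin_succ] using h_sq
  have h_det : !![x, y, 0; 0, 1, 0; 0, y, x].det ≠ 0 := by
    simp [Matrix.det_fin_three, hx.ne']
  have h_complete_squares : x • hermiteGram + y • hermiteJacobi =
      x⁻¹ • (!![x, y, 0; 0, 1, 0; 0, y, x]ᵀ * Matrix.diagonal ![1, x ^ 2 - 3 * y ^ 2, 2] *
        !![x, y, 0; 0, 1, 0; 0, y, x]) := by
    ext i j
    fin_cases i <;> fin_cases j <;>
      simp [hermiteGram, hermiteJacobi, Matrix.mul_apply, Fin.sum_univ_three] <;> field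
  rw [h_complete_squares]
  exact (posDef_transpose_mul_mul_same h_diag h_det).smul (inv_pos.2 hx)

lemma posDef_smul_hankel_gaussMoment_add_smul_succ {v x y : ℝ} (hs : s ≠ 0)
    (hxy : √3 * |y * s| < x + y * v) :
    (x • hankel 3 (gaussMoment v s) + y • hankel 3 fun k ↦ gaussMoment v s (k + 1)).PosDef := by
  have h_congr :
      x • hankel 3 (gaussMoment v s) + y • hankel 3 (fun k ↦ gaussMoment v s (k + 1)) =
      (hermiteCoords v s)ᵀ * ((x + y * v) • hermiteGram + (y * s) • hermiteJacobi) *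
        hermiteCoords v s := by
    rw [hankel_gaussMoment_eq v hs, hankel_gaussMoment_succ_eq v hs]
    simp only [Matrix.mul_add, Matrix.add_mul, Matrix.mul_smul, Matrix.smul_mul]
    module
  rw [h_congr]
  refine posDef_transpose_mul_mul_same (posDef_smul_hermiteGram_add_smul_hermiteJacobi hxy) ?_
  rw [det_hermiteCoords]
  exact mul_ne_zero hs (pow_ne_zero 2 hs)

end Hankel

/-- for `a > √3`, with `A` the Hankel matrix of the Gaussian moments
`Δ_{j+k}(v,s²)` and `B` the shifted Hankel matrix with entries `Δ_{j+k+1}(v,s²)`,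
both `(v + a s)A − B` and `B − (v − a s)A` are positive definite. -/
theorem gauss_hankel_shift_posDef (v s a : ℝ) (hs : 0 < s) (ha : Real.sqrt 3 < a) :
    ((v + a * s) • (Matrix.of fun j k : Fin 3 => gaussMoment v s (j.1 + k.1))
        - (Matrix.of fun j k : Fin 3 => gaussMoment v s (j.1 + k.1 + 1))).PosDef ∧
    ((Matrix.of fun j k : Fin 3 => gaussMoment v s (j.1 + k.1 + 1))
        - (v - a * s) • (Matrix.of fun j k : Fin 3 => gaussMoment v s (j.1 + k.1))).PosDef := by
  have h_lt : √3 * |s| < a * s := by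
    rw [abs_of_pos hs]
    exact mul_lt_mul_of_pos_right ha hs
  constructor
  · have h := posDef_smul_hankel_gaussMoment_add_smul_succ (v := v) (x := v + a * s) (y := -1)
      hs.ne' (by rw [neg_one_mul, abs_neg]; linarith)
    rwa [neg_one_smul, ← sub_eq_add_neg] at h
  · have h := posDef_smul_hankel_gaussMoment_add_smul_succ (v := v) (x := -(v - a * s)) (y := 1)
      hs.ne' (by rw [one_mul]; linarith)
    rwa [one_smul, neg_smul, neg_add_eq_sub] at h
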